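/- arXiv:2404.19724 — 2 statements merged into one kernel-verified Lean document; each statement's English description precedes it below -/
import Mathlib

section
/- Robinson's theorem: There exists a first-order formula φ(x) with exactly one free variable in the language of rings such that, interpreting formulas in the field ℚ of rational numbers, for every q ∈ ℚ the formula φ(q) holds if and only if q is a natural number (i.e., q lies in the image of the canonical map ℕ → ℚ). -/
/-!
Following Robinson, `q` is a natural number iff it is a sum of four squares and lies in every set
`S = {k | c + dk² is not represented by u² + rv² + pw²}` that contains `0` and is closed under
`k ↦ k + 1`. Only the integrality of `q` needs an argument: for each prime one chooses `r` and `p`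
so that the form `u² + rv² + pw² - gz²` with a suitable `g` is anisotropic at that prime, and
chooses `c` and `d` so that `S` consists of the `k` whose denominator is not divisible by it. These
sets are closed under `k ↦ k + 1` and contain `0`, and `q` lies in all of them only if it is an
integer. That `k` lies in `S` when it is integral at the prime follows by infinite descent. That it
does not otherwise requires representing a given `x` by `u² + rv² + pw²`: Dirichlet's theorem
provides a prime `t` for which quadratic reciprocity makes `u² + rv² = t` and `ty² + pw² = x` both
solvable by Legendre's theorem, and then `(uy)² + r(vy)² + pw² = x`.
-/

open Finset in
theorem exists_ne_zero_map_eq_zero_sq_le {ι G : Type*} [Fintype ι] [Nonempty ι] [AddCommGroup G]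
    [Fintype G] (φ : (ι → ℤ) →+ G) (B : ι → ℕ) (hB : Fintype.card G ^ 2 ≤ ∏ i, B i) :
    ∃ v ≠ 0, φ v = 0 ∧ ∀ i, v i ^ 2 ≤ B i := by
  classical
  let box : Finset (ι → ℤ) := Icc 0 fun i ↦ ((B i).sqrt : ℤ)
  have card_lt : #(univ : Finset G) < #box := by
    rw [card_univ, Pi.card_Icc]
    refine lt_of_pow_lt_pow_left₀ 2 (Nat.zero_le _) (hB.trans_lt ?_)
    have B_pos : ∀ i ∈ univ, 0 < B i :=
      CanonicallyOrderedAdd.prod_pos.1 ((pow_pos Fintype.card_pos 2).trans_le hB)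
    rw [← prod_pow]
    refine prod_lt_prod_of_nonempty B_pos (fun i _ ↦ ?_) univ_nonempty
    simpa using Nat.lt_succ_sqrt' (B i)
  obtain ⟨v, hv, w, hw, hne, heq⟩ :=
    exists_ne_map_eq_of_card_lt_of_maps_to (f := φ) card_lt fun _ _ ↦ mem_univ _
  refine ⟨v - w, sub_ne_zero.2 hne, by rw [map_sub, heq, sub_self], fun i ↦ ?_⟩
  obtain ⟨hv0, hv1⟩ := mem_Icc.1 hv
  obtain ⟨hw0, hw1⟩ := mem_Icc.1 hw
  have habs : |v i - w i| ≤ (B i).sqrt :=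
    abs_sub_le_of_nonneg_of_le (hv0 i) (hv1 i) (hw0 i) (hw1 i)
  calc (v - w) i ^ 2 = |v i - w i| ^ 2 := (sq_abs _).symm
    _ ≤ ((B i).sqrt : ℤ) ^ 2 := by gcongr
    _ ≤ B i := mod_cast Nat.sqrt_le' (B i)

section Legendre

variable {a b c : ℕ}

/-- The homomorphism `ℤ³ → ℤ/a × ℤ/b × ℤ/c` whose kernel consists of solutions of
`aX² + bY² ≡ cZ²` modulo `abc`, where `s² = bc`, `s'² = ac`, `s''² = -ab` in the three rings. -/
def legendreHom (s : ZMod a) (s' : ZMod b) (s'' : ZMod c) :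
    (Fin 3 → ℤ) →+ ZMod a × ZMod b × ZMod c where
  toFun v := (b * v 1 - s * v 2, a * v 0 - s' * v 2, a * v 0 - s'' * v 1)
  map_zero' := by simp
  map_add' v w := by ext <;> simp <;> ring

theorem natCast_dvd_of_isUnit_mul {n : ℕ} {u : ZMod n} (hu : IsUnit u) {z : ℤ}
    (h : u * z = 0) : (n : ℤ) ∣ z :=
  (ZMod.intCast_zmod_eq_zero_iff_dvd z n).1 (hu.mul_right_eq_zero.1 h)

theorem mul_mul_dvd_of_legendreHom_eq_zero (hab : a.Coprime b) (hac : a.Coprime c)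
    (hbc : b.Coprime c) {s : ZMod a} {s' : ZMod b} {s'' : ZMod c} (hs : (b * c : ZMod a) = s * s)
    (hs' : (a * c : ZMod b) = s' * s') (hs'' : -(a * b : ZMod c) = s'' * s'') {v : Fin 3 → ℤ}
    (hv : legendreHom s s' s'' v = 0) :
    (a * b * c : ℤ) ∣ a * v 0 ^ 2 + b * v 1 ^ 2 - c * v 2 ^ 2 := by
  simp only [legendreHom, AddMonoidHom.coe_mk, ZeroHom.coe_mk, Prod.mk_eq_zero] at hv
  obtain ⟨h1, h2, h3⟩ := hv
  have ha : (a : ℤ) ∣ a * v 0 ^ 2 + b * v 1 ^ 2 - c * v 2 ^ 2 := by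
    refine natCast_dvd_of_isUnit_mul ((ZMod.isUnit_iff_coprime b a).2 hab.symm) ?_
    push_cast
    rw [ZMod.natCast_self]
    linear_combination (b * v 1 + s * v 2) * h1 - (v 2 : ZMod a) ^ 2 * hs
  have hb : (b : ℤ) ∣ a * v 0 ^ 2 + b * v 1 ^ 2 - c * v 2 ^ 2 := by
    refine natCast_dvd_of_isUnit_mul ((ZMod.isUnit_iff_coprime a b).2 hab) ?_
    push_cast
    rw [ZMod.natCast_self]
    linear_combination (a * v 0 + s' * v 2) * h2 - (v 2 : ZMod b) ^ 2 * hs'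
  have hc : (c : ℤ) ∣ a * v 0 ^ 2 + b * v 1 ^ 2 - c * v 2 ^ 2 := by
    refine natCast_dvd_of_isUnit_mul ((ZMod.isUnit_iff_coprime a c).2 hac) ?_
    push_cast
    rw [ZMod.natCast_self]
    linear_combination (a * v 0 + s'' * v 1) * h3 - (v 1 : ZMod c) ^ 2 * hs''
  exact (hac.isCoprime.mul_left hbc.isCoprime).mul_dvd (hab.isCoprime.mul_dvd ha hb) hc

theorem isSquare_mul_of_sq_eq_of_sq_eq {X Y : ℤ} (hc : c ≠ 0) (hX : X ^ 2 = b * c)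
    (hY : Y ^ 2 = a * c) : IsSquare (a * b) := by
  rw [← Rat.isSquare_natCast_iff]
  refine ⟨X * Y / c, ?_⟩
  have hX' : (X : ℚ) ^ 2 = b * c := mod_cast hX
  have hY' : (Y : ℚ) ^ 2 = a * c := mod_cast hY
  have hc' : (c : ℚ) ≠ 0 := mod_cast hc
  field_simp
  push_cast
  rw [hX', hY']
  ring

theorem exists_ne_zero_mul_sq_add_mul_sq_eq_of_dvd (ha : 0 < a) (hb : 0 < b) (hc : 0 < c)
    (hsq : ¬ IsSquare (a * b)) {X Y Z : ℤ} (hne : X ≠ 0 ∨ Y ≠ 0 ∨ Z ≠ 0) (hX : X ^ 2 ≤ b * c)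
    (hY : Y ^ 2 ≤ a * c) (hZ : Z ^ 2 ≤ a * b)
    (hdvd : (a * b * c : ℤ) ∣ a * X ^ 2 + b * Y ^ 2 - c * Z ^ 2) :
    ∃ X Y Z : ℤ, (X ≠ 0 ∨ Y ≠ 0 ∨ Z ≠ 0) ∧ a * X ^ 2 + b * Y ^ 2 = c * Z ^ 2 := by
  have ha' : (0 : ℤ) < a := mod_cast ha
  have hb' : (0 : ℤ) < b := mod_cast hb
  have hc' : (0 : ℤ) < c := mod_cast hc
  have habc : (0 : ℤ) < a * b * c := by positivity
  have hZ' : Z ^ 2 < a * b := hZ.lt_of_ne fun h ↦ hsq <| Int.isSquare_natCast_iff.1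
    ⟨Z, by push_cast; rw [← h, sq]⟩
  have haX := mul_le_mul_of_nonneg_left hX ha'.le
  have hbY := mul_le_mul_of_nonneg_left hY hb'.le
  have hcZ := mul_lt_mul_of_pos_left hZ' hc'
  have haX0 : 0 ≤ a * X ^ 2 := by positivity
  have hbY0 : 0 ≤ b * Y ^ 2 := by positivity
  have hcZ0 : 0 ≤ c * Z ^ 2 := by positivity
  obtain ⟨k, hk⟩ := hdvd
  have hk_gt : -1 < k := by
    refine lt_of_mul_lt_mul_left (a := (a * b * c : ℤ)) ?_ habc.le
    linarith
  have hk_lt : k < 2 := by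
    refine lt_of_mul_lt_mul_left (a := (a * b * c : ℤ)) ?_ habc.le
    refine lt_of_le_of_ne (by linarith) fun h ↦ hsq ?_
    have hXeq : X ^ 2 = b * c := mul_left_cancel₀ ha'.ne' (by linarith)
    have hYeq : Y ^ 2 = a * c := mul_left_cancel₀ hb'.ne' (by linarith)
    exact isSquare_mul_of_sq_eq_of_sq_eq hc.ne' hXeq hYeq
  obtain rfl | rfl : k = 0 ∨ k = 1 := by omega
  · exact ⟨X, Y, Z, hne, by linarith⟩
  · -- expand `(aX + Y√(-ab)) (Z - √(-ab))` and take norms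
    refine ⟨X * Z + b * Y, Y * Z - a * X, Z ^ 2 + a * b, Or.inr (Or.inr (by positivity)), ?_⟩
    linear_combination (Z ^ 2 + a * b : ℤ) * hk

theorem exists_rat_mul_sq_add_mul_sq_eq_of_exists_int (ha : 0 < a) (hb : 0 < b)
    (h : ∃ X Y Z : ℤ, (X ≠ 0 ∨ Y ≠ 0 ∨ Z ≠ 0) ∧ a * X ^ 2 + b * Y ^ 2 = c * Z ^ 2) :
    ∃ x y : ℚ, a * x ^ 2 + b * y ^ 2 = c := by
  obtain ⟨X, Y, Z, hne, h⟩ := h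
  have hZ : Z ≠ 0 := by
    rintro rfl
    obtain ⟨hX, hY⟩ : (a * X ^ 2 : ℤ) = 0 ∧ (b * Y ^ 2 : ℤ) = 0 :=
      (add_eq_zero_iff_of_nonneg (by positivity) (by positivity)).1 (by simpa using h)
    simp_all [ha.ne', hb.ne']
  have hZ' : (Z : ℚ) ≠ 0 := mod_cast hZ
  have h' : (a : ℚ) * X ^ 2 + b * Y ^ 2 = c * Z ^ 2 := mod_cast h
  exact ⟨X / Z, Y / Z, by field_simp; rw [h', mul_comm]⟩

theorem exists_rat_mul_sq_add_mul_sq_eq_of_isSquare_mul (ha : 0 < a) (hb : 0 < b)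
    (hab : a.Coprime b) (hac : a.Coprime c) (hbc : b.Coprime c) (hsq : IsSquare (a * b))
    (h : IsSquare (-(a * b) : ZMod c)) : ∃ x y : ℚ, a * x ^ 2 + b * y ^ 2 = c := by
  obtain ⟨k, hk⟩ := isSquare_iff_exists_sq _ |>.1 hsq
  obtain ⟨A, rfl⟩ := exists_eq_pow_of_mul_eq_pow (Nat.isUnit_iff.2 hab) hk
  obtain ⟨B, rfl⟩ := exists_eq_pow_of_mul_eq_pow (Nat.isUnit_iff.2 hab.symm)
    ((mul_comm _ _).trans hk)
  have hunit : IsUnit ((A * B : ℕ) : ZMod c) := (ZMod.isUnit_iff_coprime _ c).2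
    ((hac.coprime_dvd_left (dvd_pow_self A two_ne_zero)).mul_left
      (hbc.coprime_dvd_left (dvd_pow_self B two_ne_zero)))
  have hneg : IsSquare (-1 : ZMod c) := by
    obtain ⟨u, hu⟩ := hunit
    obtain ⟨s, hs⟩ := h
    have hs' : -((u : ZMod c) ^ 2) = s * s := by rw [← hs, hu]; push_cast; ring
    exact ⟨s * ↑u⁻¹, by
      linear_combination (↑u⁻¹ : ZMod c) ^ 2 * hs' + (u * ↑u⁻¹ + 1 : ZMod c) * u.mul_inv⟩
  obtain ⟨s, t, rfl⟩ := Nat.eq_sq_add_sq_of_isSquare_mod_neg_one hneg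
  have hA : (A : ℚ) ≠ 0 := by rintro h; simp_all
  have hB : (B : ℚ) ≠ 0 := by rintro h; simp_all
  exact ⟨s / A, t / B, by push_cast; field_simp⟩

theorem exists_rat_mul_sq_add_mul_sq_eq (ha : 0 < a) (hb : 0 < b) (hc : 0 < c) (hab : a.Coprime b)
    (hac : a.Coprime c) (hbc : b.Coprime c) (h1 : IsSquare (b * c : ZMod a))
    (h2 : IsSquare (a * c : ZMod b)) (h3 : IsSquare (-(a * b) : ZMod c)) :
    ∃ x y : ℚ, a * x ^ 2 + b * y ^ 2 = c := by
  by_cases hsq : IsSquare (a * b)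
  · exact exists_rat_mul_sq_add_mul_sq_eq_of_isSquare_mul ha hb hab hac hbc hsq h3
  obtain ⟨s, hs⟩ := h1
  obtain ⟨s', hs'⟩ := h2
  obtain ⟨s'', hs''⟩ := h3
  have : NeZero a := ⟨ha.ne'⟩
  have : NeZero b := ⟨hb.ne'⟩
  have : NeZero c := ⟨hc.ne'⟩
  obtain ⟨v, hv0, hker, hle⟩ := exists_ne_zero_map_eq_zero_sq_le (legendreHom s s' s'')
    ![b * c, a * c, a * b] <| le_of_eq <| by
      simp only [Fintype.card_prod, ZMod.card, Fin.prod_univ_three, Matrix.cons_val]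
      ring
  have hne : v 0 ≠ 0 ∨ v 1 ≠ 0 ∨ v 2 ≠ 0 := by
    contrapose! hv0
    ext i
    fin_cases i <;> simp [hv0]
  exact exists_rat_mul_sq_add_mul_sq_eq_of_exists_int ha hb <|
    exists_ne_zero_mul_sq_add_mul_sq_eq_of_dvd ha hb hc hsq hne (mod_cast hle 0) (mod_cast hle 1)
      (mod_cast hle 2) (mul_mul_dvd_of_legendreHom_eq_zero hab hac hbc hs hs' hs'' hker)

end Legendre

/-- `x` is represented by the ternary quadratic form `u² + r v² + p w²` over `K`. -/
def IsTernaryValue {K : Type*} [Semiring K] (r p x : K) : Prop :=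
  ∃ u v w : K, u ^ 2 + r * v ^ 2 + p * w ^ 2 = x

section LinkingPrime

open NumberTheorySymbols

theorem jacobiSym_eq_one_of_isSquare {a : ℤ} {n : ℕ} (hcop : a.gcd n = 1)
    (h : IsSquare (a : ZMod n)) : J(a | n) = 1 := by
  obtain ⟨s, hs⟩ := h
  obtain ⟨s, rfl⟩ := ZMod.intCast_surjective s
  have hs' : J(a | n) = J(s | n) ^ 2 := by
    rw [← jacobiSym.pow_left]
    exact jacobiSym.mod_left' ((ZMod.intCast_eq_intCast_iff' _ _ n).1 (by push_cast; rw [hs, sq]))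
  obtain h | h := jacobiSym.eq_one_or_neg_one hcop
  · exact h
  · nlinarith [sq_nonneg J(s | n)]

theorem natCast_eq_chineseRemainder_symm_iff {m n : ℕ} (hmn : m.Coprime n) {a : ZMod m}
    {b : ZMod n} {t : ℕ} : (t : ZMod (m * n)) = (ZMod.chineseRemainder hmn).symm (a, b) ↔
      (t : ZMod m) = a ∧ (t : ZMod n) = b := by
  rw [RingEquiv.eq_symm_apply, map_natCast, Prod.ext_iff, Prod.fst_natCast, Prod.snd_natCast]

theorem isUnit_chineseRemainder_symm {m n : ℕ} (hmn : m.Coprime n) {a : ZMod m} {b : ZMod n}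
    (ha : IsUnit a) (hb : IsUnit b) : IsUnit ((ZMod.chineseRemainder hmn).symm (a, b)) :=
  (Prod.isUnit_iff.2 ⟨ha, hb⟩).map (ZMod.chineseRemainder hmn).symm

theorem exists_prime_gt_and_eq_and_eq (N : ℕ) {m n : ℕ} [NeZero m] [NeZero n] (hmn : m.Coprime n)
    {a : ZMod m} {b : ZMod n} (ha : IsUnit a) (hb : IsUnit b) :
    ∃ t > N, t.Prime ∧ (t : ZMod m) = a ∧ (t : ZMod n) = b := by
  obtain ⟨t, hNt, ht, h⟩ :=
    Nat.forall_exists_prime_gt_and_eq_mod (isUnit_chineseRemainder_symm hmn ha hb) N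
  exact ⟨t, hNt, ht, (natCast_eq_chineseRemainder_symm_iff hmn).1 h⟩

theorem natCast_eq_neg_iff_dvd_add {n t p : ℕ} : (t : ZMod n) = -p ↔ n ∣ t + p := by
  rw [eq_neg_iff_add_eq_zero, ← ZMod.natCast_eq_zero_iff, Nat.cast_add]

theorem exists_prime_gt_modEq_one_and_dvd_add (N : ℕ) {p M τ : ℕ} (hp : Odd p) (hM : Odd M)
    (hpM : p.Coprime M) (hτ : Odd τ) :
    ∃ t > N, t.Prime ∧ (t : ZMod p) = 1 ∧ M ∣ t + p ∧ t ≡ τ [MOD 8] := by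
  have : NeZero p := ⟨hp.pos.ne'⟩
  have : NeZero M := ⟨hM.pos.ne'⟩
  have odd_coprime_eight {n : ℕ} (hn : Odd n) : n.Coprime 8 := hn.coprime_two_right.pow_right 3
  have isUnit_neg_p : IsUnit (-p : ZMod M) := ((ZMod.isUnit_iff_coprime p M).2 hpM).neg
  obtain ⟨t, hNt, ht, htpM, ht8⟩ := exists_prime_gt_and_eq_and_eq N
    (odd_coprime_eight (hp.mul hM)) (isUnit_chineseRemainder_symm hpM isUnit_one isUnit_neg_p)
    ((ZMod.isUnit_iff_coprime τ 8).2 (odd_coprime_eight hτ))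
  obtain ⟨htp, htM⟩ := (natCast_eq_chineseRemainder_symm_iff hpM).1 htpM
  exact ⟨t, hNt, ht, htp, natCast_eq_neg_iff_dvd_add.1 htM,
    (ZMod.natCast_eq_natCast_iff t τ 8).1 ht8⟩

/-- A prime `t ≡ 1 mod 4` subject to the congruence and residue conditions under which Legendre's
theorem makes both `u² + r v² = t` and `t y² + p w² = x` solvable over `ℚ`. -/
structure IsLinkingPrime (p r x t : ℕ) : Prop where
  prime : t.Prime
  mod_four : t % 4 = 1
  p_lt : p < t
  r_lt : r < t
  x_lt : x < t
  natCast_eq_one : (t : ZMod p) = 1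
  r_dvd : r ∣ t + p
  x_dvd : x ∣ t + p
  jacobiSym_eq_one : J(x | t) = 1

theorem jacobiSym_natCast_eq_jacobiSym_neg_of_dvd_add {n t p : ℕ} (h : n ∣ t + p) :
    J(t | n) = J(-p | n) :=
  jacobiSym.mod_left' <| (ZMod.intCast_eq_intCast_iff' _ _ n).1 <| by
    push_cast; exact natCast_eq_neg_iff_dvd_add.2 h

section

variable {p r x : ℕ} (hp : Odd p) (hr : Odd r) (hpr : p.Coprime r) (hpx : p.Coprime x)
include hp hr hpr hpx

theorem exists_isLinkingPrime_of_mod_four_eq_one (hx : x % 4 = 1) (hsq : IsSquare (x : ZMod p)) :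
    ∃ t, IsLinkingPrime p r x t := by
  have hxo : Odd x := Nat.odd_iff.2 (Nat.odd_of_mod_four_eq_one hx)
  obtain ⟨t, hN, ht, htp, hdvd, ht8⟩ := exists_prime_gt_modEq_one_and_dvd_add (p + r + x) hp
    (hr.mul hxo) (hpr.mul_right hpx) odd_one
  have ht4 : t % 4 = 1 := ht8.of_dvd (by norm_num)
  have hxt : x ∣ t + p := dvd_of_mul_left_dvd hdvd
  refine ⟨t, ht, ht4, by omega, by omega, by omega, htp, dvd_of_mul_right_dvd hdvd, hxt, ?_⟩
  calc J(x | t) = J(t | x) :=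
        jacobiSym.quadratic_reciprocity_one_mod_four hx (Nat.odd_iff.2 (by omega))
    _ = J(-p | x) := jacobiSym_natCast_eq_jacobiSym_neg_of_dvd_add hxt
    _ = J(p | x) := by rw [jacobiSym.neg _ hxo, ZMod.χ₄_nat_one_mod_four hx, one_mul]
    _ = J(x | p) := jacobiSym.quadratic_reciprocity_one_mod_four' hp hx
    _ = 1 := jacobiSym_eq_one_of_isSquare hpx.symm (mod_cast hsq)

theorem exists_isLinkingPrime_of_mod_four_eq_two (hx : x % 4 = 2) :
    ∃ t, IsLinkingPrime p r x t := by
  obtain ⟨m, rfl⟩ : 2 ∣ x := by omega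
  have hm : Odd m := Nat.odd_iff.2 (by omega)
  have hpm : p.Coprime m := hpx.coprime_mul_left_right
  have hJ : J(-p | m) = 1 ∨ J(-p | m) = -1 :=
    jacobiSym.eq_one_or_neg_one (by rw [Int.neg_gcd]; exact hpm)
  obtain ⟨τ, hτ4, hτ⟩ : ∃ τ : ℕ, τ ≡ 1 [MOD 4] ∧ ZMod.χ₈ τ = J(-p | m) := by
    rcases hJ with h | h <;> rw [h]
    · exact ⟨1, rfl, rfl⟩
    · exact ⟨5, rfl, rfl⟩
  obtain ⟨t, hN, ht, htp, hdvd, ht8⟩ := exists_prime_gt_modEq_one_and_dvd_add (p + r + 2 * m) hp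
    (hr.mul hm) (hpr.mul_right hpm) (Nat.odd_iff.2 (Nat.odd_of_mod_four_eq_one hτ4))
  have ht4 : t % 4 = 1 := (ht8.of_dvd (by norm_num : 4 ∣ 8)).trans hτ4
  have hto : Odd t := Nat.odd_iff.2 (by omega)
  have hmt : m ∣ t + p := dvd_of_mul_left_dvd hdvd
  refine ⟨t, ht, ht4, by omega, by omega, by omega, htp, dvd_of_mul_right_dvd hdvd,
    hm.coprime_two_left.mul_dvd_of_dvd_of_dvd (hto.add_odd hp).two_dvd hmt, ?_⟩
  calc J((2 * m : ℕ) | t) = J(2 | t) * J(m | t) := by push_cast; exact jacobiSym.mul_left 2 m t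
    _ = ZMod.χ₈ t * J(t | m) := by
        rw [jacobiSym.at_two hto, jacobiSym.quadratic_reciprocity_one_mod_four' hm ht4]
    _ = J(-p | m) * J(-p | m) := by
        rw [(ZMod.natCast_eq_natCast_iff t τ 8).2 ht8, hτ,
          jacobiSym_natCast_eq_jacobiSym_neg_of_dvd_add hmt]
    _ = 1 := by rcases hJ with h | h <;> rw [h] <;> rfl

end

namespace IsLinkingPrime

variable {p r x t : ℕ}

theorem jacobiSym_natCast_eq_one (h : IsLinkingPrime p r x t) {n : ℕ} (hn : Odd n) (hnt : n < t)
    (hsq : IsSquare (t : ZMod n)) : J(n | t) = 1 := by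
  rw [jacobiSym.quadratic_reciprocity_one_mod_four' hn h.mod_four]
  exact jacobiSym_eq_one_of_isSquare (Nat.coprime_of_lt_prime hn.pos.ne' hnt h.prime)
    (mod_cast hsq)

theorem exists_sq_add_mul_sq_eq (h : IsLinkingPrime p r x t) (hr : Odd r)
    (hsq : IsSquare (-p : ZMod r)) : ∃ a b : ℚ, a ^ 2 + r * b ^ 2 = t := by
  have : Fact t.Prime := ⟨h.prime⟩
  have ht : IsSquare (t : ZMod r) := by rwa [natCast_eq_neg_iff_dvd_add.2 h.r_dvd]
  have hJ : J(-r | t) = 1 := by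
    rw [jacobiSym.neg _ (Nat.odd_iff.2 (Nat.odd_of_mod_four_eq_one h.mod_four)),
      ZMod.χ₄_nat_one_mod_four h.mod_four, one_mul, h.jacobiSym_natCast_eq_one hr h.r_lt ht]
  have hneg : IsSquare (-r : ZMod t) := by simpa using ZMod.isSquare_of_jacobiSym_eq_one hJ
  simpa using exists_rat_mul_sq_add_mul_sq_eq one_pos hr.pos h.prime.pos (Nat.coprime_one_left r)
    (Nat.coprime_one_left t) (Nat.coprime_of_lt_prime hr.pos.ne' h.r_lt h.prime).symm
    ⟨0, Subsingleton.elim _ _⟩ (by simpa using ht) (by simpa using hneg)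

theorem exists_mul_sq_add_mul_sq_eq (h : IsLinkingPrime p r x t) (hp : Odd p) (hx : 0 < x)
    (hpx : p.Coprime x) (hsq : IsSquare (x : ZMod p)) :
    ∃ y w : ℚ, t * y ^ 2 + p * w ^ 2 = x := by
  have : Fact t.Prime := ⟨h.prime⟩
  have hJ : J(p * x | t) = 1 := by
    rw [jacobiSym.mul_left, h.jacobiSym_eq_one, mul_one]
    exact h.jacobiSym_natCast_eq_one hp h.p_lt (by simp [h.natCast_eq_one])
  refine exists_rat_mul_sq_add_mul_sq_eq h.prime.pos hp.pos hx
    (Nat.coprime_of_lt_prime hp.pos.ne' h.p_lt h.prime)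
    (Nat.coprime_of_lt_prime hx.ne' h.x_lt h.prime) hpx ?_ ?_ ?_
  · simpa using ZMod.isSquare_of_jacobiSym_eq_one hJ
  · simpa [h.natCast_eq_one] using hsq
  · exact ⟨p, by rw [natCast_eq_neg_iff_dvd_add.2 h.x_dvd]; ring⟩

end IsLinkingPrime

theorem isTernaryValue_natCast {p r x : ℕ} (hp : Odd p) (hr : Odd r) (hpr : p.Coprime r)
    (hpx : p.Coprime x) (hx : x % 4 = 1 ∨ x % 4 = 2) (hneg : IsSquare (-p : ZMod r))
    (hsq : IsSquare (x : ZMod p)) : IsTernaryValue (r : ℚ) p x := by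
  obtain ⟨t, ht⟩ : ∃ t, IsLinkingPrime p r x t := hx.elim
    (exists_isLinkingPrime_of_mod_four_eq_one hp hr hpr hpx · hsq)
    (exists_isLinkingPrime_of_mod_four_eq_two hp hr hpr hpx)
  obtain ⟨a, b, hab⟩ := ht.exists_sq_add_mul_sq_eq hr hneg
  obtain ⟨y, w, hyw⟩ := ht.exists_mul_sq_add_mul_sq_eq hp (by omega) hpx hsq
  exact ⟨a * y, b * y, w, by linear_combination y ^ 2 * hab + hyw⟩

end LinkingPrime

section Anisotropy

theorem isTernaryValue_mul_sq_iff {K : Type*} [Field K] {r p x e : K} (he : e ≠ 0) :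
    IsTernaryValue r p (x * e ^ 2) ↔ IsTernaryValue r p x := by
  constructor
  · rintro ⟨u, v, w, h⟩
    exact ⟨u / e, v / e, w / e, by field_simp; rw [h, mul_comm]⟩
  · rintro ⟨u, v, w, rfl⟩
    exact ⟨u * e, v * e, w * e, by ring⟩

theorem eq_zero_of_forall_exists_eq_mul {M : Type*} [CommMonoidWithZero M] [IsCancelMulZero M]
    [WfDvdMonoid M] {p : M} (hp : ¬IsUnit p) {Q : M → Prop}
    (hQ : ∀ n, Q n → ∃ m, Q m ∧ n = p * m) {n : M} (hn : Q n) : n = 0 := by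
  by_contra hn0
  have pow_dvd (k : ℕ) : ∀ n, Q n → p ^ k ∣ n := by
    induction k with
    | zero => exact fun n _ ↦ by simp
    | succ k ih =>
      intro n hn
      obtain ⟨m, hm, rfl⟩ := hQ n hn
      rw [pow_succ']
      exact mul_dvd_mul_left p (ih m hm)
  obtain ⟨k, hk⟩ := FiniteMultiplicity.of_not_isUnit hp hn0
  exact hk (pow_dvd (k + 1) n hn)

theorem not_isTernaryValue_intCast_of_forall {r p g : ℤ}
    (h : ∀ E U V W : ℤ, U ^ 2 + r * V ^ 2 + p * W ^ 2 = g * E ^ 2 → E = 0) :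
    ¬IsTernaryValue (r : ℚ) p g := by
  rintro ⟨u, v, w, huvw⟩
  obtain ⟨⟨E, hE⟩, hint⟩ :=
    IsLocalization.exist_integer_multiples_of_finite (nonZeroDivisors ℤ) ![u, v, w]
  obtain ⟨U, hU⟩ := hint 0
  obtain ⟨V, hV⟩ := hint 1
  obtain ⟨W, hW⟩ := hint 2
  simp only [algebraMap_int_eq, eq_intCast, Matrix.cons_val, zsmul_eq_mul] at hU hV hW
  refine nonZeroDivisors.ne_zero hE (h E U V W ?_)
  rw [← Int.cast_inj (α := ℚ)]
  push_cast
  rw [hU, hV, hW]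
  linear_combination (E : ℚ) ^ 2 * huvw

theorem not_isTernaryValue_prime_mul {p : ℕ} [Fact p.Prime] {r g : ℤ}
    (hr : legendreSym p (-r) = -1) (hg : legendreSym p g = -1) :
    ¬IsTernaryValue (r : ℚ) p (p * g) := by
  have hp : Prime (p : ℤ) := Nat.prime_iff_prime_int.1 Fact.out
  refine mod_cast not_isTernaryValue_intCast_of_forall (r := r) (p := p) (g := p * g)
    fun E U V W h ↦
    eq_zero_of_forall_exists_eq_mul hp.not_isUnit
      (Q := fun E ↦ ∃ U V W : ℤ, U ^ 2 + r * V ^ 2 + p * W ^ 2 = p * g * E ^ 2) ?_ ⟨U, V, W, h⟩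
  rintro E ⟨U, V, W, h⟩
  obtain ⟨⟨U, rfl⟩, V, rfl⟩ := legendreSym.prime_dvd_of_eq_neg_one hr (x := U) (y := V)
    ⟨g * E ^ 2 - W ^ 2, by linear_combination h⟩
  have h' : (p : ℤ) * (U ^ 2 + r * V ^ 2) = g * E ^ 2 - W ^ 2 :=
    mul_left_cancel₀ hp.ne_zero (by linear_combination h)
  obtain ⟨⟨W, rfl⟩, E, rfl⟩ := legendreSym.prime_dvd_of_eq_neg_one hg (x := W) (y := E)
    ⟨-(U ^ 2 + r * V ^ 2), by linear_combination h'⟩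
  exact ⟨E, ⟨U, V, W, mul_left_cancel₀ hp.ne_zero (by linear_combination h')⟩, rfl⟩

theorem emod_two_and_sq_emod (n : ℤ) : n % 2 = 0 ∧ n ^ 2 % 4 = 0 ∨ n % 2 = 1 ∧ n ^ 2 % 8 = 1 := by
  obtain hn | hn := Int.even_or_odd n
  · exact .inl ⟨Int.even_iff.1 hn, Int.emod_eq_zero_of_dvd (pow_dvd_pow_of_dvd hn.two_dvd 2)⟩
  · have := Int.eight_dvd_sq_sub_one_of_odd hn
    exact .inr ⟨Int.odd_iff.1 hn, by omega⟩

theorem mod_two_and_sq_mod (n : ℕ) : n % 2 = 0 ∧ n ^ 2 % 4 = 0 ∨ n % 2 = 1 ∧ n ^ 2 % 8 = 1 :=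
  mod_cast emod_two_and_sq_emod n

theorem two_dvd_of_eight_dvd_sum_four_sq {a b c d : ℤ} (h : 8 ∣ a ^ 2 + b ^ 2 + c ^ 2 + d ^ 2) :
    2 ∣ a ∧ 2 ∣ b ∧ 2 ∣ c ∧ 2 ∣ d := by
  have := emod_two_and_sq_emod a
  have := emod_two_and_sq_emod b
  have := emod_two_and_sq_emod c
  have := emod_two_and_sq_emod d
  omega

theorem not_isTernaryValue_one_one_of_mod_eight {g : ℤ} (hg : g % 8 = 7) :
    ¬IsTernaryValue (1 : ℚ) 1 g := by
  refine mod_cast not_isTernaryValue_intCast_of_forall (r := 1) (p := 1) fun E U V W h ↦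
    eq_zero_of_forall_exists_eq_mul Int.prime_two.not_isUnit
      (Q := fun E ↦ ∃ U V W : ℤ, U ^ 2 + V ^ 2 + W ^ 2 = g * E ^ 2) ?_
      ⟨U, V, W, by linear_combination h⟩
  rintro E ⟨U, V, W, h⟩
  obtain ⟨k, hk⟩ : 8 ∣ g + 1 := by omega
  obtain ⟨⟨U, rfl⟩, ⟨V, rfl⟩, ⟨W, rfl⟩, E, rfl⟩ := two_dvd_of_eight_dvd_sum_four_sq
    (a := U) (b := V) (c := W) (d := E) ⟨k * E ^ 2, by linear_combination h + E ^ 2 * hk⟩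
  exact ⟨E, ⟨U, V, W, by linarith⟩, rfl⟩

end Anisotropy

section RobinsonSet

/-- The set `{k | c + dk² is not represented by u² + rv² + pw²}` of Robinson's definition of `ℕ`.
For each prime there are parameters for which it consists of the rationals integral there. -/
def robinsonSet {K : Type*} [Semiring K] (r p c d : K) : Set K :=
  {k | ¬IsTernaryValue r p (c + d * k ^ 2)}

theorem mem_robinsonSet_iff_natAbs_num_den {r p c d k : ℚ} : k ∈ robinsonSet r p c d ↔
    ¬IsTernaryValue r p (c * k.den ^ 2 + d * k.num.natAbs ^ 2) := by
  have hden : (k.den : ℚ) ≠ 0 := mod_cast k.den_nz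
  rw [robinsonSet, Set.mem_ofPred_eq, ← isTernaryValue_mul_sq_iff hden, add_mul, mul_assoc d,
    ← mul_pow, Rat.mul_den_eq_num, Nat.cast_natAbs, Int.cast_abs, sq_abs]

theorem isTernaryValue_one_one_of_odd {n e : ℕ} (hn : Odd n) :
    IsTernaryValue (1 : ℚ) 1 (7 * e ^ 2 + 2 * n ^ 2) := by
  have hn2 := mod_two_and_sq_mod n
  have he2 := mod_two_and_sq_mod e
  have hmod : (7 * e ^ 2 + 2 * n ^ 2) % 4 = 1 ∨ (7 * e ^ 2 + 2 * n ^ 2) % 4 = 2 := by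
    have := Nat.odd_iff.1 hn
    omega
  exact mod_cast isTernaryValue_natCast odd_one odd_one (Nat.coprime_one_left 1)
    (Nat.coprime_one_left _) hmod ⟨0, Subsingleton.elim _ _⟩ ⟨0, Subsingleton.elim _ _⟩

theorem exists_forall_isTernaryValue_iff_two_dvd :
    ∃ r P c d : ℚ, ∀ n e : ℕ, n.Coprime e →
      (IsTernaryValue r P (c * e ^ 2 + d * n ^ 2) ↔ 2 ∣ e) := by
  refine ⟨1, 1, 7, 8, fun n e hne ↦ ⟨?_, ?_⟩⟩
  · contrapose
    intro he
    have hsq := emod_two_and_sq_emod e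
    exact mod_cast not_isTernaryValue_one_one_of_mod_eight
      (g := (7 * e ^ 2 + 8 * n ^ 2 : ℕ)) (by push_cast; omega)
  · rintro ⟨e, rfl⟩
    have hn : Odd n := Nat.coprime_two_right.1 hne.coprime_mul_right_right
    have hscale : (7 * (2 * e : ℕ) ^ 2 + 8 * n ^ 2 : ℚ) = (7 * e ^ 2 + 2 * n ^ 2) * 2 ^ 2 := by
      push_cast
      ring
    rw [hscale, isTernaryValue_mul_sq_iff two_ne_zero]
    exact isTernaryValue_one_one_of_odd hn

open NumberTheorySymbols in
theorem exists_legendreSym_neg_eq_neg_one_and_isSquare_neg {p : ℕ} [Fact p.Prime] (hp : p ≠ 2) :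
    ∃ r : ℕ, Odd r ∧ p.Coprime r ∧ legendreSym p (-r) = -1 ∧ IsSquare (-p : ZMod r) := by
  have hpo : Odd p := Nat.Prime.odd_of_ne_two Fact.out hp
  obtain ⟨a, ha⟩ := FiniteField.exists_nonsquare (F := ZMod p) (by rwa [ZMod.ringChar_zmod_n])
  have ha0 : a ≠ 0 := by rintro rfl; exact ha .zero
  obtain ⟨r, hpr, hr, hra, hr3⟩ := exists_prime_gt_and_eq_and_eq p (m := p) (n := 4)
    (hpo.coprime_two_right.pow_right 2) (a := -a) (b := (3 : ℕ)) ha0.isUnit.neg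
    ((ZMod.isUnit_iff_coprime 3 4).2 (by norm_num))
  have hr4 : r % 4 = 3 := (ZMod.natCast_eq_natCast_iff r 3 4).1 hr3
  have hro : Odd r := Nat.odd_iff.2 (by omega)
  have hneg : legendreSym p (-r) = -1 := by
    rw [legendreSym.eq_neg_one_iff]
    push_cast
    rwa [hra, neg_neg]
  refine ⟨r, hro, (Nat.coprime_primes Fact.out hr).2 hpr.ne, hneg, ?_⟩
  have : Fact r.Prime := ⟨hr⟩
  have hJ : J(-p | r) = 1 := by
    rw [jacobiSym.neg _ hro, ZMod.χ₄_nat_three_mod_four hr4]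
    rw [jacobiSym.legendreSym.to_jacobiSym, jacobiSym.neg _ hpo] at hneg
    obtain hp4 | hp4 : p % 4 = 1 ∨ p % 4 = 3 := by have := Nat.odd_iff.1 hpo; omega
    · rw [ZMod.χ₄_nat_one_mod_four hp4, one_mul] at hneg
      rw [jacobiSym.quadratic_reciprocity_one_mod_four hp4 hro, hneg, neg_one_mul, neg_neg]
    · rw [ZMod.χ₄_nat_three_mod_four hp4] at hneg
      rw [jacobiSym.quadratic_reciprocity_three_mod_four hp4 hr4]
      linarith
  simpa using ZMod.isSquare_of_jacobiSym_eq_one hJ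

theorem isTernaryValue_sq_add_mul_sq {r p m n e : ℕ} (hp : Odd p) (hr : Odd r) (hpr : p.Coprime r)
    (hsq : IsSquare (-p : ZMod r)) (hpm : p ∣ m) (hm : m % 4 = 1) (hnp : n.Coprime p)
    (hne : n.Coprime e) : IsTernaryValue (r : ℚ) p (n ^ 2 + m * e ^ 2) := by
  have hn2 := mod_two_and_sq_mod n
  have he2 := mod_two_and_sq_mod e
  have hodd : n % 2 = 1 ∨ e % 2 = 1 := by
    by_contra! h
    exact Nat.not_coprime_of_dvd_of_dvd one_lt_two (by omega : 2 ∣ n) (by omega : 2 ∣ e) hne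
  have hmod : (n ^ 2 + m * e ^ 2) % 4 = (n ^ 2 + e ^ 2) % 4 := by
    rw [Nat.add_mod, Nat.mul_mod, hm, one_mul, Nat.mod_mod, ← Nat.add_mod]
  have hpx : p.Coprime (n ^ 2 + m * e ^ 2) := by
    obtain ⟨l, rfl⟩ := hpm
    rw [mul_assoc, Nat.coprime_add_mul_left_right]
    exact hnp.symm.pow_right 2
  have hsqx : IsSquare ((n ^ 2 + m * e ^ 2 : ℕ) : ZMod p) :=
    ⟨n, by simp [(ZMod.natCast_eq_zero_iff m p).2 hpm, sq]⟩
  exact mod_cast isTernaryValue_natCast hp hr hpr hpx (by omega) hsq hsqx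

theorem exists_natCast_eq_neg_and_mul_mod_four {p r : ℕ} (hp : Odd p) (hpr : p.Coprime r) :
    ∃ g : ℕ, (g : ZMod p) = -r ∧ p * g % 4 = 1 := by
  have : NeZero p := ⟨hp.pos.ne'⟩
  have hp4 : p.Coprime 4 := hp.coprime_two_right.pow_right 2
  obtain ⟨g, -, -, hgp, hg4⟩ := exists_prime_gt_and_eq_and_eq 0 hp4
    ((ZMod.isUnit_iff_coprime r p).2 hpr.symm).neg (ZMod.unitOfCoprime p hp4)⁻¹.isUnit
  refine ⟨g, hgp, (ZMod.natCast_eq_natCast_iff (p * g) 1 4).1 ?_⟩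
  rw [Nat.cast_mul, hg4, Nat.cast_one]
  exact (ZMod.unitOfCoprime p hp4).mul_inv

theorem legendreSym_mul_sq_add_prime_mul {p : ℕ} [Fact p.Prime] {e : ℤ} (g a : ℤ)
    (he : ¬(p : ℤ) ∣ e) :
    legendreSym p (g * e ^ 2 + p * a) = legendreSym p g := by
  have he0 : (e : ZMod p) ≠ 0 := by rwa [Ne, ZMod.intCast_zmod_eq_zero_iff_dvd]
  have hcast : ((g * e ^ 2 + p * a : ℤ) : ZMod p) = (g * e ^ 2 : ℤ) := by simp
  rw [legendreSym, hcast, ← legendreSym, legendreSym.mul, legendreSym.sq_one' p he0, mul_one]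

theorem exists_forall_isTernaryValue_iff_dvd_of_ne_two {p : ℕ} (hp : p.Prime) (hp2 : p ≠ 2) :
    ∃ r P c d : ℚ, ∀ n e : ℕ, n.Coprime e →
      (IsTernaryValue r P (c * e ^ 2 + d * n ^ 2) ↔ p ∣ e) := by
  have : Fact p.Prime := ⟨hp⟩
  have hpo : Odd p := hp.odd_of_ne_two hp2
  obtain ⟨r, hr, hpr, hneg, hsq⟩ := exists_legendreSym_neg_eq_neg_one_and_isSquare_neg hp2
  obtain ⟨g, hgr, hg4⟩ := exists_natCast_eq_neg_and_mul_mod_four hpo hpr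
  have hg : legendreSym p g = -1 := by
    rw [← hneg, legendreSym, legendreSym]
    push_cast
    rw [hgr]
  refine ⟨r, p, p * g, p ^ 2, fun n e hne ↦ ⟨?_, ?_⟩⟩
  · contrapose
    intro he
    have hnot := not_isTernaryValue_prime_mul hneg
      ((legendreSym_mul_sq_add_prime_mul (e := e) g (n ^ 2) (mod_cast he)).trans hg)
    have hfactor : (p * g * e ^ 2 + p ^ 2 * n ^ 2 : ℚ) =
        p * ((g * e ^ 2 + p * n ^ 2 : ℤ) : ℚ) := by
      push_cast
      ring
    rw [hfactor]
    exact mod_cast hnot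
  · rintro ⟨e, rfl⟩
    have hscale : (p * g * (p * e : ℕ) ^ 2 + p ^ 2 * n ^ 2 : ℚ) =
        (n ^ 2 + (p * g : ℕ) * e ^ 2) * p ^ 2 := by
      push_cast
      ring
    rw [hscale, isTernaryValue_mul_sq_iff (mod_cast hp.ne_zero)]
    exact isTernaryValue_sq_add_mul_sq hpo hr hpr hsq (dvd_mul_right p g) hg4
      hne.coprime_mul_right_right hne.coprime_mul_left_right

theorem exists_forall_mem_robinsonSet_iff {p : ℕ} (hp : p.Prime) :
    ∃ r P c d : ℚ, ∀ k, k ∈ robinsonSet r P c d ↔ ¬p ∣ k.den := by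
  obtain ⟨r, P, c, d, h⟩ : ∃ r P c d : ℚ, ∀ n e : ℕ, n.Coprime e →
      (IsTernaryValue r P (c * e ^ 2 + d * n ^ 2) ↔ p ∣ e) := by
    obtain rfl | hp2 := eq_or_ne p 2
    · exact exists_forall_isTernaryValue_iff_two_dvd
    · exact exists_forall_isTernaryValue_iff_dvd_of_ne_two hp hp2
  refine ⟨r, P, c, d, fun k ↦ ?_⟩
  rw [mem_robinsonSet_iff_natAbs_num_den, h _ _ k.reduced]

theorem den_eq_one_of_forall_mem_robinsonSet {q : ℚ}
    (h : ∀ r p c d : ℚ, 0 ∈ robinsonSet r p c d →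
      (∀ m ∈ robinsonSet r p c d, m + 1 ∈ robinsonSet r p c d) → q ∈ robinsonSet r p c d) :
    q.den = 1 := by
  by_contra hq
  obtain ⟨p, hp, hpq⟩ := Nat.exists_prime_and_dvd hq
  obtain ⟨r, P, c, d, hS⟩ := exists_forall_mem_robinsonSet_iff hp
  refine (hS q).1 (h r P c d ?_ fun m hm ↦ ?_) hpq
  · simpa [hS] using hp.ne_one
  · rw [hS] at hm ⊢
    rwa [← Int.cast_one, Rat.add_intCast_den]

theorem exists_natCast_eq_iff {q : ℚ} : (∃ n : ℕ, (n : ℚ) = q) ↔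
    (∃ a b c d : ℚ, a ^ 2 + b ^ 2 + c ^ 2 + d ^ 2 = q) ∧
    ∀ r p c d : ℚ, 0 ∈ robinsonSet r p c d →
      (∀ m ∈ robinsonSet r p c d, m + 1 ∈ robinsonSet r p c d) → q ∈ robinsonSet r p c d := by
  constructor
  · rintro ⟨n, rfl⟩
    refine ⟨?_, fun r p c d h0 hsucc ↦ ?_⟩
    · obtain ⟨a, b, c, d, h⟩ := Nat.sum_four_squares n
      exact ⟨a, b, c, d, mod_cast h⟩
    · induction n with
      | zero => simpa using h0
      | succ n ih => simpa using hsucc n ih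
  · rintro ⟨⟨a, b, c, d, hq⟩, h⟩
    have hq0 : 0 ≤ q := hq ▸ by positivity
    obtain ⟨z, rfl⟩ : ∃ z : ℤ, (z : ℚ) = q :=
      ⟨q.num, Rat.coe_int_num_of_den_eq_one (den_eq_one_of_forall_mem_robinsonSet h)⟩
    lift z to ℕ using mod_cast hq0
    exact ⟨z, rfl⟩

end RobinsonSet

section Definability

open FirstOrder FirstOrder.Language FirstOrder.Ring

variable {α : Type*}

/-- The formula asserting that the form `u² + rv² + pw²` represents `x`. -/
noncomputable def ternaryValueFormula (r p x : ring.Term α) : ring.Formula α :=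
  let lift (t : ring.Term α) : ring.Term (α ⊕ Fin 3) := t.relabel Sum.inl
  let y (i : Fin 3) : ring.Term (α ⊕ Fin 3) := Term.var (Sum.inr i)
  Formula.iExs (Fin 3) <|
    Term.equal (y 0 * y 0 + lift r * (y 1 * y 1) + lift p * (y 2 * y 2)) (lift x)

/-- The formula asserting that `k` lies in the Robinson set with parameters `r`, `p`, `c`, `d`. -/
noncomputable def robinsonSetFormula (r p c d k : ring.Term α) : ring.Formula α :=
  ∼(ternaryValueFormula r p (c + d * (k * k)))

/-- The formula asserting that `x` is a sum of four squares. -/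
noncomputable def sumFourSqFormula (x : ring.Term α) : ring.Formula α :=
  let y (i : Fin 4) : ring.Term (α ⊕ Fin 4) := Term.var (Sum.inr i)
  Formula.iExs (Fin 4) <|
    Term.equal (y 0 * y 0 + y 1 * y 1 + y 2 * y 2 + y 3 * y 3) (x.relabel Sum.inl)

/-- The formula asserting that the Robinson set with parameters `s 0`, …, `s 3` is inductive. -/
noncomputable def inductiveFormula (s : Fin 4 → ring.Term α) : ring.Formula α :=
  let lift (i : Fin 4) : ring.Term (α ⊕ Fin 1) := (s i).relabel Sum.inl
  let m : ring.Term (α ⊕ Fin 1) := Term.var (Sum.inr 0)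
  robinsonSetFormula (s 0) (s 1) (s 2) (s 3) 0 ⊓ Formula.iAlls (Fin 1)
    ((robinsonSetFormula (lift 0) (lift 1) (lift 2) (lift 3) m).imp
      (robinsonSetFormula (lift 0) (lift 1) (lift 2) (lift 3) (m + 1)))

/-- Robinson's formula: `x` is a sum of four squares lying in every inductive Robinson set. -/
noncomputable def robinsonFormula (x : ring.Term α) : ring.Formula α :=
  let s (i : Fin 4) : ring.Term (α ⊕ Fin 4) := Term.var (Sum.inr i)
  sumFourSqFormula x ⊓ Formula.iAlls (Fin 4)
    ((inductiveFormula s).imp (robinsonSetFormula (s 0) (s 1) (s 2) (s 3) (x.relabel Sum.inl)))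

variable {K : Type*} [Ring K] [CompatibleRing K] {v : α → K}

theorem realize_ternaryValueFormula {r p x : ring.Term α} :
    (ternaryValueFormula r p x).Realize v ↔
      IsTernaryValue (r.realize v) (p.realize v) (x.realize v) := by
  simp [ternaryValueFormula, IsTernaryValue, Fin.exists_fin_succ_pi, sq, Function.comp_def]

theorem realize_robinsonSetFormula {r p c d k : ring.Term α} :
    (robinsonSetFormula r p c d k).Realize v ↔ k.realize v ∈
      robinsonSet (r.realize v) (p.realize v) (c.realize v) (d.realize v) := by
  simp [robinsonSetFormula, robinsonSet, realize_ternaryValueFormula, sq]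

theorem realize_sumFourSqFormula {x : ring.Term α} :
    (sumFourSqFormula x).Realize v ↔
      ∃ a b c d : K, a ^ 2 + b ^ 2 + c ^ 2 + d ^ 2 = x.realize v := by
  simp [sumFourSqFormula, Fin.exists_fin_succ_pi, sq]

theorem realize_inductiveFormula {s : Fin 4 → ring.Term α} :
    (inductiveFormula s).Realize v ↔
      let S := robinsonSet ((s 0).realize v) ((s 1).realize v) ((s 2).realize v) ((s 3).realize v)
      0 ∈ S ∧ ∀ m ∈ S, m + 1 ∈ S := by
  simp [inductiveFormula, realize_robinsonSetFormula, Fin.forall_fin_succ_pi, Function.comp_def]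

theorem realize_robinsonFormula {x : ring.Term α} :
    (robinsonFormula x).Realize v ↔
      (∃ a b c d : K, a ^ 2 + b ^ 2 + c ^ 2 + d ^ 2 = x.realize v) ∧
      ∀ r p c d : K, 0 ∈ robinsonSet r p c d →
        (∀ m ∈ robinsonSet r p c d, m + 1 ∈ robinsonSet r p c d) →
        x.realize v ∈ robinsonSet r p c d := by
  simp [robinsonFormula, realize_sumFourSqFormula, realize_inductiveFormula,
    realize_robinsonSetFormula, Fin.forall_fin_succ_pi, Function.comp_def]

end Definability

/-- **Robinson's theorem.** There is a first-order formula `φ` with one free variable in the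
language of rings such that, interpreted in the field `ℚ`, `φ(q)` holds iff `q` is a natural
number (i.e. `q` is in the image of the canonical map `ℕ → ℚ`). -/
theorem robinson_nat_definable_in_rat :
    letI := FirstOrder.Ring.compatibleRingOfRing ℚ
    ∃ φ : FirstOrder.Language.ring.Formula (Fin 1),
      ∀ q : ℚ, φ.Realize (fun _ => q) ↔ ∃ n : ℕ, (n : ℚ) = q := by
  let _ := FirstOrder.Ring.compatibleRingOfRing ℚ
  exact ⟨robinsonFormula (.var 0), fun _ ↦ realize_robinsonFormula.trans exists_natCast_eq_iff.symm⟩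
end

section
/- Completeness of the rule of McIver, Morgan, Kaminski and Katoen: Let M be a finitely-branching MDP with absorbing terminal state ⊥ that is almost surely terminating from the initial state σ. Then there exist antitone functions p : (0,∞) → (0,1] and d : (0,∞) → (0,∞) (i.e., r₁ ≤ r₂ implies p(r₁) ≥ p(r₂) and d(r₁) ≥ d(r₂)) and a function V : S → ℝ such that V(⊥) = 0, V(s) > 0 for every s ∈ Reach(σ) with s ≠ ⊥, V is a supermartingale function on Reach(σ), and for every s ∈ Reach(σ) with s ≠ ⊥ and every action μ ∈ Act(s), μ({s' : V(s) − V(s') ≥ d(V(s))}) ≥ p(V(s)). -/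
open scoped ENNReal Classical

/-- A finitely-branching MDP on a state space `S`: each state has a nonempty finite
set of available actions, each a finitely-supported PMF on `S`. -/
structure MDP (S : Type) where
  act : S → Finset (PMF S)
  act_nonempty : ∀ s, (act s).Nonempty
  act_finSupp : ∀ s, ∀ μ ∈ act s, (μ : PMF S).support.Finite

/-- A scheduler maps every history `(s₀, …, sₙ)` (given as the list of earlier
states `s₀, …, sₙ₋₁` together with the current state `sₙ`) to an available action. -/
structure Scheduler {S : Type} (M : MDP S) where
  choose : List S → S → PMF S
  choose_mem : ∀ hist s, choose hist s ∈ M.act s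

namespace MDP

variable {S : Type}

/-- Reachability: `s'` is reachable from `σ` via a finite path each of whose steps
lies in the support of some available action. -/
inductive Reach (M : MDP S) (σ : S) : S → Prop
  | refl : Reach M σ σ
  | step {s s' : S} (μ : PMF S) : Reach M σ s → μ ∈ M.act s → s' ∈ μ.support → Reach M σ s'

/-- Probability that the run (currently at `s`, with past history `hist`) visits the
set `T` within the next `k` steps, under scheduler `𝔰`. -/
noncomputable def hitProbAux (M : MDP S) (𝔰 : Scheduler M) (T : Set S) :
    ℕ → List S → S → ℝ≥0∞
  | 0, _, s => if s ∈ T then 1 else 0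
  | k + 1, hist, s =>
      if s ∈ T then 1
      else ∑' s', (𝔰.choose hist s) s' * hitProbAux M 𝔰 T k (hist ++ [s]) s'

/-- Probability that the run started at `σ` visits `T` within the first `k` steps. -/
noncomputable def hitProbWithin (M : MDP S) (𝔰 : Scheduler M) (σ : S) (T : Set S)
    (k : ℕ) : ℝ≥0∞ :=
  hitProbAux M 𝔰 T k [] σ

/-- Probability that the run started at `σ` ever visits `T`, under scheduler `𝔰`. -/
noncomputable def hitProb (M : MDP S) (𝔰 : Scheduler M) (σ : S) (T : Set S) : ℝ≥0∞ :=
  ⨆ k, hitProbWithin M 𝔰 σ T k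

/-- The terminal state `term` is absorbing: the only action there is the Dirac PMF. -/
def Absorbing (M : MDP S) (term : S) : Prop :=
  M.act term = {PMF.pure term}

/-- Termination probability: infimum over schedulers of the probability of visiting
the terminal state. -/
noncomputable def PrTerm (M : MDP S) (term σ : S) : ℝ≥0∞ :=
  ⨅ 𝔰 : Scheduler M, hitProb M 𝔰 σ {term}

/-- Almost-sure termination from `σ`. -/
def AST (M : MDP S) (term σ : S) : Prop := PrTerm M term σ = 1

/-- Mass a PMF assigns to a set. -/
noncomputable def mass (μ : PMF S) (A : Set S) : ℝ≥0∞ := ∑' a : A, μ a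

/-- Expected value of a real-valued function under a (finitely supported) PMF. -/
noncomputable def expect (μ : PMF S) (V : S → ℝ) : ℝ := ∑' s, (μ s).toReal * V s

/-- `V` is a supermartingale function on the states reachable from `σ`. -/
def SupermartingaleOn (M : MDP S) (σ : S) (V : S → ℝ) : Prop :=
  ∀ s, M.Reach σ s → ∀ μ ∈ M.act s, expect μ V ≤ V s

/-- `(Ψ, p)` is a stochastic invariant for initial state `σ`: under every scheduler the
probability that the run ever leaves `Ψ` is at most `p`. -/
def StochasticInvariant (M : MDP S) (σ : S) (Ψ : Set S) (p : ℝ) : Prop :=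
  ⨆ 𝔰 : Scheduler M, hitProb M 𝔰 σ Ψᶜ ≤ ENNReal.ofReal p

end MDP

/-!
A function `0 ≤ g ≤ 1` vanishing at `⊥` and fixed by the Bellman operator
`f ↦ (s ↦ max_μ 𝔼_μ f)` admits a memoryless scheduler `𝔰` with `ℙ_{𝔰,s}(visit ⊥) + g s ≤ 1`, so
almost-sure termination forces `g = 0` on the reachable states. Finite branching makes the Bellman
operator commute with decreasing limits, which produces two such functions: the limit of the
maximal probabilities of surviving `k` steps, and the limit of the maximal probabilities `uₙ` of
ever being at a live state at distance more than `n` from `σ`.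

Both limits are therefore zero. Along a sufficiently sparse subsequence, `∑ⱼ u_{nⱼ}` is a
supermartingale that is finite on the reachable states, with finite sublevel sets there. Adding
the discounted sum `∑ₖ 2⁻ᵏ · (maximal probability of surviving k steps)` makes it decrease
strictly at live states. The progress functions are minima over the finite sublevel sets.
-/

namespace MDP

open Filter Topology

section Sequences

theorem natCast_le_tsum_of_one_le {f : ℕ → ℝ≥0∞} {m : ℕ} (hf : ∀ j < m, 1 ≤ f j) :
    (m : ℝ≥0∞) ≤ ∑' j, f j :=
  calc (m : ℝ≥0∞) = ∑ _j ∈ Finset.range m, 1 := by simp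
    _ ≤ ∑ j ∈ Finset.range m, f j := Finset.sum_le_sum fun j hj => hf j (Finset.mem_range.1 hj)
    _ ≤ ∑' j, f j := ENNReal.sum_le_tsum _

theorem tsum_two_inv_pow_ne_top : ∑' j : ℕ, (2⁻¹ : ℝ≥0∞) ^ j ≠ ⊤ := by
  simp [ENNReal.tsum_geometric]

theorem tsum_ne_top_of_le_two_inv_pow {f : ℕ → ℝ≥0∞} (hf : ∀ j, f j ≠ ⊤) {i : ℕ}
    (hle : ∀ j ≥ i, f j ≤ 2⁻¹ ^ j) : ∑' j, f j ≠ ⊤ := by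
  rw [← ENNReal.summable.sum_add_tsum_nat_add' (k := i)]
  have htail : ∑' j, f (j + i) ≤ ∑' j : ℕ, (2⁻¹ : ℝ≥0∞) ^ j :=
    ENNReal.tsum_le_tsum fun j => (hle _ (Nat.le_add_left i j)).trans
      (pow_le_pow_right_of_le_one' (by simp) (Nat.le_add_right j i))
  exact ENNReal.add_ne_top.2 ⟨ENNReal.sum_ne_top.2 fun j _ => hf j,
    ne_top_of_le_ne_top tsum_two_inv_pow_ne_top htail⟩

theorem exists_tsum_comp_ne_top {α : Type*} {u : ℕ → α → ℝ≥0∞} {F : ℕ → Set α}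
    (hu : ∀ n a, u n a ≠ ⊤) (hF : ∀ j, (F j).Finite) (hmono : Monotone F)
    (hlim : ∀ a ∈ ⋃ j, F j, Tendsto (u · a) atTop (𝓝 0)) :
    ∃ n : ℕ → ℕ, ∀ a ∈ ⋃ j, F j, ∑' j, u (n j) a ≠ ⊤ := by
  have hsmall (j : ℕ) : ∃ n, ∀ a ∈ F j, u n a ≤ 2⁻¹ ^ j :=
    ((eventually_all_finite (hF j)).2 fun a ha =>
      (hlim a (Set.mem_iUnion_of_mem j ha)).eventually_le_const
        (ENNReal.pow_pos (by simp) j)).exists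
  choose n hn using hsmall
  refine ⟨n, fun a ha => ?_⟩
  obtain ⟨i, hi⟩ := Set.mem_iUnion.1 ha
  exact tsum_ne_top_of_le_two_inv_pow (fun j => hu (n j) a) fun j hj => hn j a (hmono hj hi)

theorem exists_antitone_pos_le_comp {α β : Type*} [Preorder β] {V : α → β}
    (hfin : ∀ r, {a | V a ≤ r}.Finite) {q : α → ℝ} (hq : ∀ a, 0 < q a) :
    ∃ p : β → ℝ, Antitone p ∧ (∀ r, 0 < p r ∧ p r ≤ 1) ∧ ∀ a, p (V a) ≤ q a := by
  let values (r : β) : Set ℝ := insert 1 (q '' {a | V a ≤ r})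
  have values_finite (r : β) : (values r).Finite := ((hfin r).image q).insert 1
  have values_pos (r : β) : ∀ x ∈ values r, 0 < x := by
    rintro x (rfl | ⟨a, -, rfl⟩)
    exacts [one_pos, hq a]
  have values_nonempty (r : β) : (values r).Nonempty := Set.insert_nonempty _ _
  have sInf_le {r : β} {x : ℝ} (hx : x ∈ values r) : sInf (values r) ≤ x :=
    csInf_le (values_finite r).bddBelow hx
  refine ⟨fun r => sInf (values r), fun r₁ r₂ hr => ?_, fun r => ⟨?_, ?_⟩, fun a => ?_⟩
  · refine csInf_le_csInf (values_finite r₂).bddBelow (values_nonempty r₁) ?_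
    exact Set.insert_subset_insert (Set.image_mono fun a ha => le_trans ha hr)
  · exact values_pos r _ ((values_nonempty r).csInf_mem (values_finite r))
  · exact sInf_le (Set.mem_insert _ _)
  · exact sInf_le (Set.mem_insert_of_mem _ ⟨a, le_rfl, rfl⟩)

end Sequences

section Expectation

variable {S : Type} {μ : PMF S} {f g : S → ℝ≥0∞}

/-- Expected value of an `ℝ≥0∞`-valued function under a PMF. Unlike for `expect`, the defining
series always has its intended value. -/
noncomputable def lexpect (μ : PMF S) (f : S → ℝ≥0∞) : ℝ≥0∞ := ∑' s, μ s * f s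

theorem lexpect_mono (h : ∀ s ∈ μ.support, f s ≤ g s) : lexpect μ f ≤ lexpect μ g := by
  refine ENNReal.tsum_le_tsum fun s => ?_
  by_cases hs : μ s = 0
  · simp [hs]
  · exact mul_le_mul_right (h s ((μ.mem_support_iff s).2 hs)) _

@[simp]
theorem lexpect_const (μ : PMF S) (c : ℝ≥0∞) : lexpect μ (fun _ => c) = c := by
  simp [lexpect, ENNReal.tsum_mul_right]

@[simp]
theorem lexpect_pure (t : S) (f : S → ℝ≥0∞) : lexpect (PMF.pure t) f = f t := by
  simp [lexpect, PMF.pure_apply]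

theorem lexpect_add (μ : PMF S) (f g : S → ℝ≥0∞) :
    lexpect μ (fun s => f s + g s) = lexpect μ f + lexpect μ g := by
  simp only [lexpect, mul_add, ENNReal.tsum_add]

theorem lexpect_const_mul (μ : PMF S) (c : ℝ≥0∞) (f : S → ℝ≥0∞) :
    lexpect μ (fun s => c * f s) = c * lexpect μ f := by
  simp only [lexpect, ← ENNReal.tsum_mul_left, mul_left_comm]

theorem lexpect_tsum {ι : Type*} (μ : PMF S) (f : ι → S → ℝ≥0∞) :
    lexpect μ (fun s => ∑' i, f i s) = ∑' i, lexpect μ (f i) := by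
  simp only [lexpect, ← ENNReal.tsum_mul_left]
  exact ENNReal.tsum_comm

theorem lexpect_le_of_forall_le {c : ℝ≥0∞} (h : ∀ s ∈ μ.support, f s ≤ c) : lexpect μ f ≤ c :=
  (lexpect_mono h).trans_eq (lexpect_const μ c)

theorem exists_mem_support_lt_of_lexpect_lt {c : ℝ≥0∞} (h : lexpect μ f < c) :
    ∃ s ∈ μ.support, f s < c := by
  by_contra! hc
  exact h.not_ge ((lexpect_const μ c).symm.trans_le (lexpect_mono hc))

theorem lexpect_eq_zero_iff : lexpect μ f = 0 ↔ ∀ s ∈ μ.support, f s = 0 := by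
  simp [lexpect, or_iff_not_imp_left]

theorem lexpect_iInf_of_antitone (hμ : μ.support.Finite) {f : ℕ → S → ℝ≥0∞} (hf : Antitone f) :
    lexpect μ (⨅ k, f k) = ⨅ k, lexpect μ (f k) := by
  have lexpect_eq_sum (g : S → ℝ≥0∞) : lexpect μ g = ∑ s ∈ hμ.toFinset, μ s * g s :=
    tsum_eq_sum fun s hs => by simp_all
  have sum_iInf : ⨅ k, ∑ s ∈ hμ.toFinset, μ s * f k s = ∑ s ∈ hμ.toFinset, ⨅ k, μ s * f k s :=
    ENNReal.iInf_sum fun _ i j => ⟨max i j, fun s _ =>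
      ⟨mul_le_mul_right (hf (le_max_left i j) s) _, mul_le_mul_right (hf (le_max_right i j) s) _⟩⟩
  simp only [lexpect_eq_sum, sum_iInf, iInf_apply]
  refine Finset.sum_congr rfl fun s hs => ENNReal.mul_iInf_of_ne ?_ (μ.apply_ne_top s)
  simpa using hs

theorem expect_toReal (hf : ∀ s ∈ μ.support, f s ≠ ⊤) :
    expect μ (fun s => (f s).toReal) = (lexpect μ f).toReal := by
  rw [expect, lexpect, ENNReal.tsum_toReal_eq]
  · simp only [ENNReal.toReal_mul]
  · intro s
    by_cases hs : μ s = 0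
    · simp [hs]
    · exact ENNReal.mul_ne_top (μ.apply_ne_top s) (hf s ((μ.mem_support_iff s).2 hs))

theorem apply_le_mass {s : S} {A : Set S} (hs : s ∈ A) : μ s ≤ mass μ A :=
  ENNReal.le_tsum (f := fun a : A => μ a) ⟨s, hs⟩

end Expectation

section Bellman

variable {S : Type} (M : MDP S)

/-- The Bellman operator of the MDP, sending `f` to its largest expected value after one step.
A function `f` with `M.bellman f ≤ f` is called superharmonic; it is a supermartingale under
every scheduler. -/
noncomputable def bellman : (S → ℝ≥0∞) →o (S → ℝ≥0∞) where
  toFun f s := ⨆ μ : M.act s, lexpect μ.1 f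
  monotone' _ _ h _ := iSup_mono fun _ => lexpect_mono fun s _ => h s

variable {M} {f g : S → ℝ≥0∞} {s σ term : S} {μ : PMF S}

theorem lexpect_le_bellman (f : S → ℝ≥0∞) (hμ : μ ∈ M.act s) : lexpect μ f ≤ M.bellman f s :=
  le_iSup (fun ν : M.act s => lexpect ν.1 f) ⟨μ, hμ⟩

theorem bellman_le_iff {c : ℝ≥0∞} : M.bellman f s ≤ c ↔ ∀ μ ∈ M.act s, lexpect μ f ≤ c :=
  iSup_le_iff.trans Subtype.forall

theorem exists_lexpect_eq_bellman (M : MDP S) (f : S → ℝ≥0∞) (s : S) :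
    ∃ μ ∈ M.act s, lexpect μ f = M.bellman f s := by
  have : Nonempty (M.act s) := (M.act_nonempty s).to_subtype
  obtain ⟨μ, hμ⟩ := exists_eq_ciSup_of_finite (f := fun μ : M.act s => lexpect μ.1 f)
  exact ⟨μ, μ.2, hμ⟩

theorem bellman_apply_of_absorbing (hterm : M.Absorbing term) (f : S → ℝ≥0∞) :
    M.bellman f term = f term := by
  obtain ⟨μ, hμ, hμf⟩ := exists_lexpect_eq_bellman M f term
  rw [show M.act term = {PMF.pure term} from hterm, Finset.mem_singleton] at hμ
  rw [← hμf, hμ, lexpect_pure]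

theorem bellman_indicator_compl_le (hterm : M.Absorbing term) :
    M.bellman (Set.indicator {term}ᶜ 1) ≤ Set.indicator {term}ᶜ 1 := by
  intro s
  by_cases hs : s = term
  · rw [hs, bellman_apply_of_absorbing hterm]
  · rw [Set.indicator_of_mem (show s ∈ ({term}ᶜ : Set S) from hs)]
    exact bellman_le_iff.2 fun μ _ => lexpect_le_of_forall_le fun t _ =>
      Set.indicator_le_self _ 1 t

theorem bellman_tsum_le {ι : Type*} (f : ι → S → ℝ≥0∞) :
    M.bellman (fun s => ∑' i, f i s) s ≤ ∑' i, M.bellman (f i) s :=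
  bellman_le_iff.2 fun μ hμ => (lexpect_tsum μ f).trans_le
    (ENNReal.tsum_le_tsum fun i => lexpect_le_bellman (f i) hμ)

theorem bellman_iInf_of_antitone (M : MDP S) {f : ℕ → S → ℝ≥0∞} (hf : Antitone f) :
    M.bellman (⨅ k, f k) = ⨅ k, M.bellman (f k) := by
  ext s
  have hanti (μ : M.act s) : Antitone fun k => lexpect μ.1 (f k) :=
    fun _ _ h => lexpect_mono fun t _ => hf h t
  calc M.bellman (⨅ k, f k) s = ⨆ μ : M.act s, ⨅ k, lexpect μ.1 (f k) :=
        iSup_congr fun μ => lexpect_iInf_of_antitone (M.act_finSupp s μ.1 μ.2) hf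
    _ = ⨅ k, M.bellman (f k) s := (iInf_iSup_of_antitone hanti).symm
    _ = (⨅ k, M.bellman (f k)) s := (iInf_apply ..).symm

theorem eq_zero_of_bellman_le_of_reach (hf : M.bellman f ≤ f) (hσ : f σ = 0)
    (hs : M.Reach σ s) : f s = 0 := by
  induction hs with
  | refl => exact hσ
  | @step s s' μ _ hμ hs' ih =>
    have hzero : lexpect μ f = 0 :=
      le_zero_iff.1 (((lexpect_le_bellman f hμ).trans (hf s)).trans_eq ih)
    exact lexpect_eq_zero_iff.1 hzero s' hs'

theorem hitProbAux_add_le_one (𝔰 : Scheduler M) {T : Set S} (hg : g ≤ Tᶜ.indicator 1)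
    (hsub : ∀ hist s, g s ≤ lexpect (𝔰.choose hist s) g) (k : ℕ) (hist : List S) (s : S) :
    hitProbAux M 𝔰 T k hist s + g s ≤ 1 := by
  have hit_case {s : S} (hs : s ∈ T) : 1 + g s ≤ 1 := by
    have : g s = 0 := by simpa [hs] using hg s
    simp [this]
  induction k generalizing hist s with
  | zero =>
    rw [hitProbAux]
    split_ifs with hs
    · exact hit_case hs
    · simpa [hs] using hg s
  | succ k ih =>
    rw [hitProbAux]
    split_ifs with hs
    · exact hit_case hs
    · calc _ ≤ lexpect (𝔰.choose hist s) (hitProbAux M 𝔰 T k (hist ++ [s])) +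
              lexpect (𝔰.choose hist s) g := add_le_add_right (hsub hist s) _
        _ = lexpect (𝔰.choose hist s) fun t => hitProbAux M 𝔰 T k (hist ++ [s]) t + g t :=
            (lexpect_add ..).symm
        _ ≤ 1 := lexpect_le_of_forall_le fun t _ => ih (hist ++ [s]) t

theorem eq_zero_of_le_bellman (hAST : M.AST term σ) (hg : g ≤ Set.indicator {term}ᶜ 1)
    (hsub : g ≤ M.bellman g) : g σ = 0 := by
  choose act act_mem act_eq using exists_lexpect_eq_bellman M g
  let 𝔰 : Scheduler M := ⟨fun _ s => act s, fun _ s => act_mem s⟩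
  have hadd (k : ℕ) : hitProbWithin M 𝔰 σ {term} k + g σ ≤ 1 :=
    hitProbAux_add_le_one 𝔰 hg (fun _ s => (hsub s).trans_eq (act_eq s).symm) k [] σ
  have hsum : 1 + g σ ≤ 1 :=
    calc 1 + g σ = M.PrTerm term σ + g σ := by rw [show M.PrTerm term σ = 1 from hAST]
      _ ≤ hitProb M 𝔰 σ {term} + g σ := add_le_add_left (iInf_le _ 𝔰) _
      _ ≤ 1 := by
        rw [hitProb, ENNReal.iSup_add]
        exact iSup_le hadd
  exact le_zero_iff.1 ((ENNReal.add_le_add_iff_left ENNReal.one_ne_top).1 (by simpa using hsum))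

theorem eq_zero_of_bellman_eq (hAST : M.AST term σ) (hg : g ≤ Set.indicator {term}ᶜ 1)
    (hharm : M.bellman g = g) (hs : M.Reach σ s) : g s = 0 :=
  eq_zero_of_bellman_le_of_reach hharm.le (eq_zero_of_le_bellman hAST hg hharm.ge) hs

end Bellman

section Survival

variable {S : Type} {M : MDP S} {s σ term : S} {μ : PMF S}

/-- The largest probability, over all schedulers, of not being at `term` after `k` steps. -/
noncomputable def survival (M : MDP S) (term : S) (k : ℕ) : S → ℝ≥0∞ :=
  M.bellman^[k] (Set.indicator {term}ᶜ 1)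

theorem survival_succ (M : MDP S) (term : S) (k : ℕ) :
    M.survival term (k + 1) = M.bellman (M.survival term k) :=
  Function.iterate_succ_apply' _ _ _

theorem survival_antitone (hterm : M.Absorbing term) : Antitone (M.survival term) :=
  M.bellman.monotone.antitone_iterate_of_map_le (bellman_indicator_compl_le hterm)

theorem survival_le_indicator (hterm : M.Absorbing term) (k : ℕ) :
    M.survival term k ≤ Set.indicator {term}ᶜ 1 :=
  survival_antitone hterm (Nat.zero_le k)

theorem iInf_survival_eq_zero (hterm : M.Absorbing term) (hAST : M.AST term σ)
    (hs : M.Reach σ s) : ⨅ k, M.survival term k s = 0 := by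
  have hharm : M.bellman (⨅ k, M.survival term k) = ⨅ k, M.survival term k := by
    simp only [bellman_iInf_of_antitone M (survival_antitone hterm), ← survival_succ]
    exact (survival_antitone hterm).iInf_nat_add 1
  rw [← iInf_apply]
  exact eq_zero_of_bellman_eq hAST ((iInf_le _ 0).trans (survival_le_indicator hterm 0)) hharm hs

theorem exists_survival_succ_lt (hterm : M.Absorbing term) (hAST : M.AST term σ)
    (hs : M.Reach σ s) (hne : s ≠ term) :
    ∃ k, M.survival term (k + 1) s < M.survival term k s := by
  by_contra! hle
  have hone (k : ℕ) : 1 ≤ M.survival term k s := by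
    induction k with
    | zero => simp [survival, hne]
    | succ k ih => exact ih.trans (hle k)
  have hinf : 1 ≤ ⨅ k, M.survival term k s := le_iInf hone
  simp [iInf_survival_eq_zero hterm hAST hs] at hinf

/-- The discounted sum of the survival probabilities, a bounded superharmonic function that
decreases strictly in expectation at the live states. -/
noncomputable def discountedSurvival (M : MDP S) (term : S) : S → ℝ≥0∞ :=
  fun s => ∑' k, 2⁻¹ ^ k * M.survival term k s

theorem discountedSurvival_term (hterm : M.Absorbing term) :
    M.discountedSurvival term term = 0 := by
  have hzero (k : ℕ) : M.survival term k term = 0 := by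
    simpa using survival_le_indicator hterm k term
  simp [discountedSurvival, hzero]

theorem discountedSurvival_ne_top (hterm : M.Absorbing term) (s : S) :
    M.discountedSurvival term s ≠ ⊤ :=
  ne_top_of_le_ne_top tsum_two_inv_pow_ne_top <| ENNReal.tsum_le_tsum fun k =>
    mul_le_of_le_one_right' <| (survival_le_indicator hterm k s).trans <|
      Set.indicator_le_self _ 1 s

theorem lexpect_discountedSurvival_le (hμ : μ ∈ M.act s) :
    lexpect μ (M.discountedSurvival term) ≤ ∑' k, 2⁻¹ ^ k * M.survival term (k + 1) s := by
  unfold discountedSurvival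
  simp only [lexpect_tsum, lexpect_const_mul, survival_succ]
  exact ENNReal.tsum_le_tsum fun k => mul_le_mul_right (lexpect_le_bellman _ hμ) _

theorem two_inv_pow_mul_survival_succ_le (hterm : M.Absorbing term) (s : S) (k : ℕ) :
    2⁻¹ ^ k * M.survival term (k + 1) s ≤ 2⁻¹ ^ k * M.survival term k s :=
  mul_le_mul_right (survival_antitone hterm k.le_succ s) _

theorem bellman_discountedSurvival_le (hterm : M.Absorbing term) :
    M.bellman (M.discountedSurvival term) ≤ M.discountedSurvival term :=
  fun s => bellman_le_iff.2 fun _ hμ => (lexpect_discountedSurvival_le hμ).trans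
    (ENNReal.tsum_le_tsum (two_inv_pow_mul_survival_succ_le hterm s))

theorem lexpect_discountedSurvival_lt (hterm : M.Absorbing term) (hAST : M.AST term σ)
    (hs : M.Reach σ s) (hne : s ≠ term) (hμ : μ ∈ M.act s) :
    lexpect μ (M.discountedSurvival term) < M.discountedSurvival term s := by
  obtain ⟨k, hk⟩ := exists_survival_succ_lt hterm hAST hs hne
  have hle := two_inv_pow_mul_survival_succ_le hterm s
  refine (lexpect_discountedSurvival_le hμ).trans_lt (ENNReal.tsum_lt_tsum (i := k) ?_ hle ?_)
  · exact ne_top_of_le_ne_top (discountedSurvival_ne_top hterm s) (ENNReal.tsum_le_tsum hle)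
  · exact (ENNReal.mul_lt_mul_iff_right (pow_ne_zero _ (by simp))
      (ENNReal.pow_ne_top (by simp))).2 hk

end Survival

section MaxReach

variable {S : Type} {M : MDP S} {A : Set S} {f : S → ℝ≥0∞} {s σ term : S}

/-- The largest probability, over all schedulers, of ever visiting `A`, encoded as the least
superharmonic function that is at least `1` on `A`. -/
noncomputable def maxReach (M : MDP S) (A : Set S) : S → ℝ≥0∞ :=
  OrderHom.lfp (OrderHom.const _ (A.indicator 1) ⊔ M.bellman)

theorem maxReach_eq (M : MDP S) (A : Set S) :
    A.indicator 1 ⊔ M.bellman (M.maxReach A) = M.maxReach A :=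
  OrderHom.map_lfp (OrderHom.const _ (A.indicator 1) ⊔ M.bellman)

theorem maxReach_le (hA : A.indicator 1 ≤ f) (hf : M.bellman f ≤ f) : M.maxReach A ≤ f :=
  OrderHom.lfp_le _ (sup_le hA hf)

theorem indicator_le_maxReach (M : MDP S) (A : Set S) : A.indicator 1 ≤ M.maxReach A :=
  le_sup_left.trans_eq (maxReach_eq M A)

theorem bellman_maxReach_le (M : MDP S) (A : Set S) : M.bellman (M.maxReach A) ≤ M.maxReach A :=
  le_sup_right.trans_eq (maxReach_eq M A)

theorem one_le_maxReach (hs : s ∈ A) : 1 ≤ M.maxReach A s := by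
  simpa [hs] using indicator_le_maxReach M A s

theorem maxReach_eq_bellman (hs : s ∉ A) : M.maxReach A s = M.bellman (M.maxReach A) s := by
  simpa [hs] using (congrFun (maxReach_eq M A) s).symm

theorem maxReach_mono : Monotone M.maxReach := fun _ B hAB =>
  maxReach_le ((Set.indicator_le_indicator_of_subset hAB fun _ => zero_le).trans
    (indicator_le_maxReach M B)) (bellman_maxReach_le M B)

theorem maxReach_le_indicator (hterm : M.Absorbing term) (hA : term ∉ A) :
    M.maxReach A ≤ Set.indicator {term}ᶜ 1 :=
  maxReach_le (Set.indicator_le_indicator_of_subset (Set.subset_compl_singleton_iff.2 hA)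
    fun _ => zero_le) (bellman_indicator_compl_le hterm)

theorem bellman_iInf_maxReach {A : ℕ → Set S} (hA : Antitone A) (hempty : ⋂ n, A n = ∅) :
    M.bellman (⨅ n, M.maxReach (A n)) = ⨅ n, M.maxReach (A n) := by
  have hanti : Antitone fun n => M.maxReach (A n) := maxReach_mono.comp_antitone hA
  rw [bellman_iInf_of_antitone M hanti]
  refine le_antisymm (iInf_mono fun n => bellman_maxReach_le M (A n)) fun s => ?_
  obtain ⟨n₀, hn₀⟩ : ∃ n₀, s ∉ A n₀ := by
    simpa using Set.eq_empty_iff_forall_notMem.1 hempty s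
  simp only [iInf_apply]
  refine le_iInf fun m => (iInf_le _ (max m n₀)).trans ?_
  rw [maxReach_eq_bellman fun h => hn₀ (hA (le_max_right m n₀) h)]
  exact M.bellman.monotone (hanti (le_max_left m n₀)) s

theorem tendsto_maxReach_zero (hterm : M.Absorbing term) (hAST : M.AST term σ) {A : ℕ → Set S}
    (hA : Antitone A) (hempty : ⋂ n, A n = ∅) (hnot : ∀ n, term ∉ A n) (hs : M.Reach σ s) :
    Tendsto (fun n => M.maxReach (A n) s) atTop (𝓝 0) := by
  have hzero : (⨅ n, M.maxReach (A n)) s = 0 :=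
    eq_zero_of_bellman_eq hAST ((iInf_le _ 0).trans (maxReach_le_indicator hterm (hnot 0)))
      (bellman_iInf_maxReach hA hempty) hs
  rw [← hzero, iInf_apply]
  exact tendsto_atTop_iInf fun _ _ h => maxReach_mono (hA h) s

end MaxReach

section Reachability

variable {S : Type} {M : MDP S} {s σ term : S}

/-- The states reachable from `σ` in at most `n` steps. -/
def reachWithin (M : MDP S) (σ : S) : ℕ → Set S
  | 0 => {σ}
  | n + 1 => reachWithin M σ n ∪ ⋃ s ∈ reachWithin M σ n, ⋃ μ ∈ M.act s, μ.support

theorem reachWithin_mono (M : MDP S) (σ : S) : Monotone (M.reachWithin σ) :=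
  monotone_nat_of_le_succ fun _ => Set.subset_union_left

theorem reachWithin_finite (M : MDP S) (σ : S) (n : ℕ) : (M.reachWithin σ n).Finite := by
  induction n with
  | zero => exact Set.finite_singleton σ
  | succ n ih =>
    exact ih.union (ih.biUnion fun s _ => (M.act s).finite_toSet.biUnion (M.act_finSupp s))

theorem iUnion_reachWithin (M : MDP S) (σ : S) : ⋃ n, M.reachWithin σ n = {s | M.Reach σ s} := by
  refine Set.Subset.antisymm (Set.iUnion_subset fun n => ?_) fun s hs => ?_
  · induction n with
    | zero => exact Set.singleton_subset_iff.2 Reach.refl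
    | succ n ih =>
      exact Set.union_subset ih (Set.iUnion₂_subset fun s hs =>
        Set.iUnion₂_subset fun μ hμ s' hs' => Reach.step μ (ih hs) hμ hs')
  · induction hs with
    | refl => exact Set.mem_iUnion_of_mem 0 rfl
    | step μ _ hμ hs' ih =>
      obtain ⟨n, hn⟩ := Set.mem_iUnion.1 ih
      exact Set.mem_iUnion_of_mem (n + 1)
        (Or.inr (Set.mem_biUnion hn (Set.mem_biUnion hμ hs')))

/-- The live states: reachable from `σ` and different from the terminal state. -/
def live (M : MDP S) (σ term : S) : Set S := {s | M.Reach σ s ∧ s ≠ term}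

theorem iInter_live_diff_reachWithin (M : MDP S) (σ term : S) :
    ⋂ n, M.live σ term \ M.reachWithin σ n = ∅ := by
  rw [← Set.sdiff_iUnion, iUnion_reachWithin, Set.sdiff_eq_empty]
  exact fun _ hs => hs.1

end Reachability

section Supermartingale

variable {S : Type} {M : MDP S} {σ term : S}

theorem exists_proper_superharmonic (hterm : M.Absorbing term) (hAST : M.AST term σ) :
    ∃ V : S → ℝ≥0∞, M.bellman V ≤ V ∧ V term = 0 ∧ (∀ s, M.Reach σ s → V s ≠ ⊤) ∧
      ∀ m : ℕ, {s ∈ M.live σ term | V s < m}.Finite := by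
  let far (n : ℕ) : Set S := M.live σ term \ M.reachWithin σ n
  have far_antitone : Antitone far := fun _ _ h =>
    Set.sdiff_subset_sdiff_right (M.reachWithin_mono σ h)
  have term_notMem_far (n : ℕ) : term ∉ far n := fun h => h.1.2 rfl
  have maxReach_far_le (n : ℕ) : M.maxReach (far n) ≤ Set.indicator {term}ᶜ 1 :=
    maxReach_le_indicator hterm (term_notMem_far n)
  obtain ⟨n, hn⟩ : ∃ n : ℕ → ℕ, ∀ s ∈ ⋃ j, M.reachWithin σ j,
      ∑' j, M.maxReach (far (n j)) s ≠ ⊤ := by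
    refine exists_tsum_comp_ne_top (u := fun n => M.maxReach (far n)) (fun n s => ?_)
      (M.reachWithin_finite σ) (M.reachWithin_mono σ) fun s hs => ?_
    · refine ne_top_of_le_ne_top ENNReal.one_ne_top ((maxReach_far_le n s).trans ?_)
      exact Set.indicator_le_self _ 1 s
    · rw [iUnion_reachWithin] at hs
      exact tendsto_maxReach_zero hterm hAST far_antitone (M.iInter_live_diff_reachWithin σ term)
        term_notMem_far hs
  rw [iUnion_reachWithin] at hn
  refine ⟨fun s => ∑' j, M.maxReach (far (n j)) s, fun s => ?_, ?_, hn, fun m => ?_⟩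
  · exact (bellman_tsum_le _).trans (ENNReal.tsum_le_tsum fun j => bellman_maxReach_le M _ s)
  · exact ENNReal.tsum_eq_zero.2 fun j => by simpa using maxReach_far_le (n j) term
  · refine (M.reachWithin_finite σ ((Finset.range m).sup n)).subset fun s hs => ?_
    by_contra hfar
    refine hs.2.not_ge (natCast_le_tsum_of_one_le fun j hj => one_le_maxReach ?_)
    exact far_antitone (Finset.le_sup (Finset.mem_range.2 hj)) ⟨hs.1, hfar⟩

theorem exists_strict_superharmonic (hterm : M.Absorbing term) (hAST : M.AST term σ) :
    ∃ V : S → ℝ≥0∞, M.bellman V ≤ V ∧ V term = 0 ∧ (∀ s, M.Reach σ s → V s ≠ ⊤) ∧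
      (∀ s ∈ M.live σ term, ∀ μ ∈ M.act s, lexpect μ V < V s) ∧
      ∀ m : ℕ, {s ∈ M.live σ term | V s < m}.Finite := by
  obtain ⟨U, hU, hU_term, hU_top, hU_fin⟩ := exists_proper_superharmonic hterm hAST
  refine ⟨fun s => U s + M.discountedSurvival term s, fun s => bellman_le_iff.2 fun μ hμ => ?_,
    ?_, fun s hs => ?_, fun s hs μ hμ => ?_, fun m => ?_⟩
  · rw [lexpect_add]
    exact add_le_add ((lexpect_le_bellman _ hμ).trans (hU s))
      ((lexpect_le_bellman _ hμ).trans (bellman_discountedSurvival_le hterm s))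
  · simp [hU_term, discountedSurvival_term hterm]
  · exact ENNReal.add_ne_top.2 ⟨hU_top s hs, discountedSurvival_ne_top hterm s⟩
  · rw [lexpect_add]
    have hle : lexpect μ U ≤ U s := (lexpect_le_bellman U hμ).trans (hU s)
    exact ENNReal.add_lt_add_of_le_of_lt (ne_top_of_le_ne_top (hU_top s hs.1) hle) hle
      (lexpect_discountedSurvival_lt hterm hAST hs.1 hs.2 hμ)
  · exact (hU_fin m).subset fun s hs => ⟨hs.1, le_self_add.trans_lt hs.2⟩

theorem exists_strict_supermartingale (hterm : M.Absorbing term) (hAST : M.AST term σ) :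
    ∃ V : S → ℝ, V term = 0 ∧ (∀ s ∈ M.live σ term, 0 < V s) ∧ M.SupermartingaleOn σ V ∧
      (∀ s ∈ M.live σ term, ∀ μ ∈ M.act s, ∃ s' ∈ μ.support, V s' < V s) ∧
      ∀ r, {s ∈ M.live σ term | V s ≤ r}.Finite := by
  obtain ⟨V, hV, hV_term, hV_top, hV_lt, hV_fin⟩ := exists_strict_superharmonic hterm hAST
  refine ⟨fun s => (V s).toReal, by simp [hV_term], fun s hs => ?_, fun s hs μ hμ => ?_,
    fun s hs μ hμ => ?_, fun r => ?_⟩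
  · obtain ⟨μ, hμ⟩ := M.act_nonempty s
    exact ENNReal.toReal_pos (bot_le.trans_lt (hV_lt s hs μ hμ)).ne' (hV_top s hs.1)
  · rw [expect_toReal fun s' hs' => hV_top s' (hs.step μ hμ hs')]
    exact ENNReal.toReal_mono (hV_top s hs) ((lexpect_le_bellman V hμ).trans (hV s))
  · obtain ⟨s', hs', hlt⟩ := exists_mem_support_lt_of_lexpect_lt (hV_lt s hs μ hμ)
    exact ⟨s', hs', ENNReal.toReal_strict_mono (hV_top s hs.1) hlt⟩
  · obtain ⟨m, hm⟩ := exists_nat_gt r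
    refine (hV_fin m).subset fun s hs => ⟨hs.1, ?_⟩
    exact (ENNReal.toReal_lt_toReal (hV_top s hs.1.1) (ENNReal.natCast_ne_top m)).1
      (by simpa using hs.2.trans_lt hm)

theorem exists_progress_functions {V : S → ℝ} {Q : Set S}
    (hfin : ∀ r, {s ∈ Q | V s ≤ r}.Finite)
    (hdrop : ∀ s ∈ Q, ∀ μ ∈ M.act s, ∃ s' ∈ μ.support, V s' < V s) :
    ∃ p d : ℝ → ℝ, Antitone p ∧ Antitone d ∧ (∀ r, 0 < p r ∧ p r ≤ 1) ∧ (∀ r, 0 < d r) ∧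
      ∀ s ∈ Q, ∀ μ ∈ M.act s,
        ENNReal.ofReal (p (V s)) ≤ mass μ {s' | d (V s) ≤ V s - V s'} := by
  let Choice := Σ s : Q, M.act s
  have choice_fin (r : ℝ) : {c : Choice | V c.1 ≤ r}.Finite := by
    have hQ : {s : Q | V s ≤ r}.Finite :=
      Set.Finite.of_finite_image ((hfin r).subset (by rintro _ ⟨s, hs, rfl⟩; exact ⟨s.2, hs⟩))
        Subtype.val_injective.injOn
    refine hQ.preimage' (f := Sigma.fst) fun s _ => ?_
    rw [← Set.range_sigmaMk]
    exact Set.finite_range _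
  choose next next_mem next_lt using fun c : Choice => hdrop c.1 c.1.2 c.2 c.2.2
  obtain ⟨p, p_anti, p_mem, p_le⟩ := exists_antitone_pos_le_comp choice_fin
    (q := fun c => (c.2.1 (next c)).toReal) fun c =>
      ENNReal.toReal_pos ((PMF.mem_support_iff _ _).1 (next_mem c)) (PMF.apply_ne_top _ _)
  obtain ⟨d, d_anti, d_mem, d_le⟩ := exists_antitone_pos_le_comp choice_fin
    (q := fun c => V c.1 - V (next c)) fun c => sub_pos.2 (next_lt c)
  refine ⟨p, d, p_anti, d_anti, p_mem, fun r => (d_mem r).1, fun s hs μ hμ => ?_⟩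
  let c : Choice := ⟨⟨s, hs⟩, ⟨μ, hμ⟩⟩
  exact (ENNReal.ofReal_le_of_le_toReal (p_le c)).trans (apply_le_mass (d_le c))

end Supermartingale

end MDP

theorem mmkk_rule_complete_general {S : Type} (M : MDP S) (term σ : S)
    (hterm : M.Absorbing term) (hAST : M.AST term σ) :
    ∃ (p d : ℝ → ℝ) (V : S → ℝ),
      (∀ r : ℝ, 0 < r → 0 < p r ∧ p r ≤ 1) ∧
      (∀ r : ℝ, 0 < r → 0 < d r) ∧
      (∀ r₁ r₂ : ℝ, 0 < r₁ → r₁ ≤ r₂ → p r₂ ≤ p r₁) ∧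
      (∀ r₁ r₂ : ℝ, 0 < r₁ → r₁ ≤ r₂ → d r₂ ≤ d r₁) ∧
      V term = 0 ∧
      (∀ s, M.Reach σ s → s ≠ term → 0 < V s) ∧
      M.SupermartingaleOn σ V ∧
      (∀ s, M.Reach σ s → s ≠ term → ∀ μ ∈ M.act s,
        ENNReal.ofReal (p (V s)) ≤ MDP.mass μ {s' | d (V s) ≤ V s - V s'}) := by
  obtain ⟨V, V_term, V_pos, V_super, V_drop, V_fin⟩ :=
    MDP.exists_strict_supermartingale hterm hAST
  obtain ⟨p, d, p_anti, d_anti, p_mem, d_pos, hprogress⟩ :=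
    MDP.exists_progress_functions V_fin V_drop
  exact ⟨p, d, V, fun r _ => p_mem r, fun r _ => d_pos r, fun _ _ _ h => p_anti h,
    fun _ _ _ h => d_anti h, V_term, fun s hs hne => V_pos s ⟨hs, hne⟩, V_super,
    fun s hs hne => hprogress s ⟨hs, hne⟩⟩

/-- **Completeness of the rule of McIver, Morgan, Kaminski and Katoen.** If `M` is almost
surely terminating from `σ`, then there exist antitone progress functions
`p : (0,∞) → (0,1]` and `d : (0,∞) → (0,∞)` and a supermartingale `V` (zero at the
terminal state, positive at all other reachable states) such that at every reachable
non-terminal state `s` and action `μ`, the value of `V` drops by at least `d (V s)` with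
probability at least `p (V s)`. -/
theorem mmkk_rule_complete {S : Type} [Countable S] (M : MDP S) (term σ : S)
    (hterm : M.Absorbing term) (hAST : M.AST term σ) :
    ∃ (p d : ℝ → ℝ) (V : S → ℝ),
      (∀ r : ℝ, 0 < r → 0 < p r ∧ p r ≤ 1) ∧
      (∀ r : ℝ, 0 < r → 0 < d r) ∧
      (∀ r₁ r₂ : ℝ, 0 < r₁ → r₁ ≤ r₂ → p r₂ ≤ p r₁) ∧
      (∀ r₁ r₂ : ℝ, 0 < r₁ → r₁ ≤ r₂ → d r₂ ≤ d r₁) ∧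
      V term = 0 ∧
      (∀ s, M.Reach σ s → s ≠ term → 0 < V s) ∧
      M.SupermartingaleOn σ V ∧
      (∀ s, M.Reach σ s → s ≠ term → ∀ μ ∈ M.act s,
        ENNReal.ofReal (p (V s)) ≤ MDP.mass μ {s' | d (V s) ≤ V s - V s'}) :=
  mmkk_rule_complete_general M term σ hterm hAST
end
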